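/- arXiv:math/0606143 — 3 statements merged into one kernel-verified Lean document; each statement's English description precedes it below -/
import Mathlib

section
/- Let (G,L) be a graph/list pair, v a node with neighbors v_1,…,v_m (m ≥ 1) listed in a fixed order, and j a color. Suppose Z(G_v, L_{k,j}) > 0 for every 1 ≤ k ≤ m (note L_{1,j} = L restricted to G_v). Then the number of proper list colorings of (G_v, L) in which none of v_1,…,v_{k−1} receives color j equals Z(G_v, L_{k,j}) for each k, and P_{G_v,L}( c(v_k) ≠ j for all 1 ≤ k ≤ m ) = ∏_{k=1}^{m} P_{G_v, L_{k,j}}( c(v_k) ≠ j ) = ∏_{k=1}^{m} ( 1 − P_{G_v, L_{k,j}}( c(v_k) = j ) ). -/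
open scoped Classical

/-- The set of proper list colorings of the graph/list pair `(G, L)`. -/
def properColorings {V : Type} (G : SimpleGraph V) (L : V → Finset ℕ) : Set (V → ℕ) :=
  {c | (∀ v, c v ∈ L v) ∧ ∀ u w, G.Adj u w → c u ≠ c w}

/-- `Z(G,L)`: the number of proper list colorings. -/
noncomputable def numColorings {V : Type} (G : SimpleGraph V) (L : V → Finset ℕ) : ℕ :=
  (properColorings G L).ncard

/-- `P_{G,L}(E)`: probability of the event `E` under the uniform distribution on
proper list colorings. -/
noncomputable def colorProb {V : Type} (G : SimpleGraph V) (L : V → Finset ℕ)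
    (E : Set (V → ℕ)) : ℝ :=
  ((properColorings G L ∩ E).ncard : ℝ) / (numColorings G L : ℝ)

/-- The graph `G_v`: `G` with the node `v` deleted. -/
def Gdel {V : Type} (G : SimpleGraph V) (v : V) : SimpleGraph {u : V // u ≠ v} :=
  SimpleGraph.comap Subtype.val G

/-- The list vector `L_{k,j}`: the color `j` is deleted from the lists of the neighbors
`v_r` of `v` with `1 ≤ r < k` (here `w` lists the neighbors in a fixed order, `0`-indexed),
all other lists are unchanged. -/
noncomputable def Lki {V : Type} (L : V → Finset ℕ) (v : V) {m : ℕ} (w : Fin m → V)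
    (k : ℕ) (j : ℕ) : {u : V // u ≠ v} → Finset ℕ :=
  fun u => if ∃ r : Fin m, (r : ℕ) + 1 < k ∧ w r = u.1 then L u.1 \ {j} else L u.1

/-- The neighbor `v_{r+1} = w r` of `v`, viewed as a node of `G_v`. -/
def nbVtx {V : Type} (G : SimpleGraph V) (v : V) {m : ℕ} (w : Fin m → V)
    (hnbr : ∀ u, G.Adj v u ↔ ∃ r, w r = u) (r : Fin m) : {u : V // u ≠ v} :=
  ⟨w r, ((hnbr (w r)).mpr ⟨r, rfl⟩).ne'⟩

theorem properColorings_Lki {V : Type} (G : SimpleGraph V) (L : V → Finset ℕ)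
    (v : V) (m : ℕ) (w : Fin m → V)
    (hnbr : ∀ u, G.Adj v u ↔ ∃ r, w r = u) (j : ℕ) (k : ℕ) :
    properColorings (Gdel G v) (Lki L v w k j) =
      properColorings (Gdel G v) (fun u => L u.1) ∩
          {c | ∀ r : Fin m, (r : ℕ) + 1 < k → c (nbVtx G v w hnbr r) ≠ j} := by
  ext c
  simp only [properColorings, Set.mem_inter_iff, Set.mem_setOf_eq]
  constructor
  · rintro ⟨h1, h2⟩
    refine ⟨⟨fun u => ?_, h2⟩, fun r hr => ?_⟩
    · have h := h1 u
      unfold Lki at h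
      split_ifs at h
      · exact (Finset.mem_sdiff.mp h).1
      · exact h
    · have h := h1 (nbVtx G v w hnbr r)
      unfold Lki at h
      rw [if_pos ⟨r, hr, rfl⟩] at h
      simpa using (Finset.mem_sdiff.mp h).2
  · rintro ⟨⟨h1, h2⟩, h3⟩
    refine ⟨fun u => ?_, h2⟩
    unfold Lki
    split_ifs with h
    · obtain ⟨r, hr, hru⟩ := h
      have hu : nbVtx G v w hnbr r = u := Subtype.ext hru
      have h4 := h3 r hr
      rw [hu] at h4
      simpa using ⟨h1 u, h4⟩
    · exact h1 u

theorem properColorings_finite {V : Type} [Finite V] (G : SimpleGraph V) (L : V → Finset ℕ) :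
    (properColorings G L).Finite := by
  refine (Set.Finite.pi' (fun u : V => (L u).finite_toSet)).subset ?_
  intro c hc u
  exact hc.1 u

theorem telescope (f : ℕ → ℝ) (n : ℕ) (h : ∀ k, k < n → f k ≠ 0) (hn : 1 ≤ n) :
    ∏ k : Fin n, f (k + 1) / f k = f n / f 0 := by
  rw [Fin.prod_univ_eq_prod_range (fun k => f (k + 1) / f k) n]
  induction n, hn using Nat.le_induction with
  | base => simp
  | succ n hn ih =>
    rw [Finset.prod_range_succ, ih fun k hk => h k (by omega)]
    have := h n (by omega)
    have := h 0 (by omega)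
    field_simp

/-- Conditioning identity and telescoping: the number of proper list colorings of `(G_v, L)`
in which none of `v_1, …, v_{k-1}` gets the color `j` equals `Z(G_v, L_{k,j})`, and
`P_{G_v,L}(c(v_k) ≠ j, 1 ≤ k ≤ m) = ∏_k P_{G_v,L_{k,j}}(c(v_k) ≠ j)
 = ∏_k (1 − P_{G_v,L_{k,j}}(c(v_k) = j))`. -/
theorem stmt4 {V : Type} [Fintype V] (G : SimpleGraph V) (L : V → Finset ℕ)
    (v : V) (m : ℕ) (hm : 1 ≤ m) (w : Fin m → V) (hinj : Function.Injective w)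
    (hnbr : ∀ u, G.Adj v u ↔ ∃ r, w r = u) (j : ℕ)
    (hZk : ∀ k : ℕ, 1 ≤ k → k ≤ m → 0 < numColorings (Gdel G v) (Lki L v w k j)) :
    (∀ k : ℕ, 1 ≤ k → k ≤ m →
      (properColorings (Gdel G v) (fun u => L u.1) ∩
          {c | ∀ r : Fin m, (r : ℕ) + 1 < k → c (nbVtx G v w hnbr r) ≠ j}).ncard
        = numColorings (Gdel G v) (Lki L v w k j)) ∧
    colorProb (Gdel G v) (fun u => L u.1)
        {c | ∀ r : Fin m, c (nbVtx G v w hnbr r) ≠ j}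
      = ∏ k : Fin m,
          colorProb (Gdel G v) (Lki L v w ((k : ℕ) + 1) j)
            {c | c (nbVtx G v w hnbr k) ≠ j} ∧
    colorProb (Gdel G v) (fun u => L u.1)
        {c | ∀ r : Fin m, c (nbVtx G v w hnbr r) ≠ j}
      = ∏ k : Fin m,
          (1 - colorProb (Gdel G v) (Lki L v w ((k : ℕ) + 1) j)
            {c | c (nbVtx G v w hnbr k) = j}) := by
  have key := properColorings_Lki G L v m w hnbr j
  have hA : colorProb (Gdel G v) (fun u => L u.1)
        {c | ∀ r : Fin m, c (nbVtx G v w hnbr r) ≠ j}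
      = ∏ k : Fin m,
          colorProb (Gdel G v) (Lki L v w ((k : ℕ) + 1) j)
            {c | c (nbVtx G v w hnbr k) ≠ j} := by
    have h1 : ∀ k : Fin m, colorProb (Gdel G v) (Lki L v w ((k : ℕ) + 1) j)
            {c | c (nbVtx G v w hnbr k) ≠ j} =
        (numColorings (Gdel G v) (Lki L v w ((k : ℕ) + 1 + 1) j) : ℝ) /
          (numColorings (Gdel G v) (Lki L v w ((k : ℕ) + 1) j) : ℝ) := by
      intro k
      unfold colorProb
      congr 2
      unfold numColorings
      congr 1
      rw [key, key, Set.inter_assoc]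
      congr 1
      ext c
      simp only [Set.mem_inter_iff, Set.mem_setOf_eq]
      constructor
      · rintro ⟨h, h'⟩ r hr
        by_cases hrk : r = k
        · rw [hrk]; exact h'
        · have : (r : ℕ) ≠ k := fun h => hrk (Fin.ext h)
          exact h r (by omega)
      · intro h
        exact ⟨fun r hr => h r (by omega), h k (by omega)⟩
    rw [Finset.prod_congr rfl fun k _ => h1 k]
    rw [telescope (fun k => (numColorings (Gdel G v) (Lki L v w (k + 1) j) : ℝ)) m
      (fun k hk => by
        have := hZk (k + 1) (by omega) (by omega)
        positivity) hm]
    unfold colorProb numColorings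
    simp only [key]
    congr 3
    · congr 1
      ext c
      simp only [Set.mem_setOf_eq]
      exact ⟨fun h r _ => h r, fun h r => h r (by omega)⟩
    · simp
  refine ⟨fun k _ _ => by rw [numColorings, key k], hA, ?_⟩
  rw [hA]
  refine Finset.prod_congr rfl fun k _ => ?_
  have hpos := hZk (k + 1) (by omega) (by omega)
  have hfin := properColorings_finite (Gdel G v) (Lki L v w ((k : ℕ) + 1) j)
  have hsum := Set.ncard_inter_add_ncard_diff_eq_ncard
    (properColorings (Gdel G v) (Lki L v w ((k : ℕ) + 1) j))
    {c | c (nbVtx G v w hnbr k) = j} hfin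
  have hne : (numColorings (Gdel G v) (Lki L v w ((k : ℕ) + 1) j) : ℝ) ≠ 0 := by positivity
  rw [eq_sub_iff_add_eq]
  unfold colorProb
  rw [← add_div, div_eq_one_iff_eq hne, add_comm]
  exact_mod_cast hsum
end

section
/- Let β ≥ 1 be a real number and let (G,L) be a graph/list pair such that |L(u)| ≥ Δ(u) + β for every node u, where Δ(u) is the degree of u in G. Then Z(G,L) > 0 and for every node v and every color i ∈ L(v): P_{G,L}(c(v)=i) ≤ 1/β. -/
open scoped Classical

/-- The degree of a node `u` in `G`. -/
noncomputable def deg {V : Type} (G : SimpleGraph V) (u : V) : ℕ :=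
  (G.neighborSet u).ncard

lemma avail_card {V : Type} [Fintype V] (β : ℝ) (G : SimpleGraph V) (L : V → Finset ℕ)
    (hL : ∀ u, (deg G u : ℝ) + β ≤ ((L u).card : ℝ)) (c : V → ℕ) (v : V) :
    β ≤ ((L v \ (G.neighborFinset v).image c).card : ℝ) := by
  have h1 : (L v).card ≤ (L v \ (G.neighborFinset v).image c).card
      + ((G.neighborFinset v).image c).card := by
    have := Finset.le_card_sdiff ((G.neighborFinset v).image c) (L v)
    omega
  have h2 : ((G.neighborFinset v).image c).card ≤ deg G v := by
    refine Finset.card_image_le.trans (le_of_eq ?_)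
    rw [deg, Set.ncard_eq_toFinset_card', SimpleGraph.neighborFinset]
  have h3 := hL v
  have h4 : ((L v).card : ℝ) ≤ ((L v \ (G.neighborFinset v).image c).card : ℝ) + (deg G v : ℝ) := by
    exact_mod_cast h1.trans (by omega)
  linarith

lemma finite_colorings {V : Type} [Fintype V] (G : SimpleGraph V) (L : V → Finset ℕ) :
    (properColorings G L).Finite := by
  refine (Fintype.piFinset L).finite_toSet.subset ?_
  intro c hc
  simpa using hc.1

lemma greedy {V : Type} [Fintype V] (β : ℝ) (hβ : 1 ≤ β) (G : SimpleGraph V) (L : V → Finset ℕ)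
    (hL : ∀ u, (deg G u : ℝ) + β ≤ ((L u).card : ℝ)) (S : Finset V) :
    ∃ c : V → ℕ, (∀ v, c v ∈ L v) ∧ ∀ u ∈ S, ∀ w ∈ S, G.Adj u w → c u ≠ c w := by
  have key : ∀ (c : V → ℕ) (v : V), ∃ j, j ∈ L v \ (G.neighborFinset v).image c := by
    intro c v
    have h := avail_card β G L hL c v
    apply Finset.card_pos.mp
    have : (0:ℝ) < ((L v \ (G.neighborFinset v).image c).card : ℝ) := by linarith
    exact_mod_cast this
  induction S using Finset.induction_on with
  | empty =>
    choose f hf using key (fun _ => 0)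
    exact ⟨f, fun v => (Finset.mem_sdiff.mp (hf v)).1, by simp⟩
  | insert a S ha ih =>
    obtain ⟨c, hc, hp⟩ := ih
    obtain ⟨j, hj⟩ := key c a
    simp only [Finset.mem_sdiff, Finset.mem_image, SimpleGraph.mem_neighborFinset, not_exists,
      not_and] at hj
    refine ⟨Function.update c a j, ?_, ?_⟩
    · intro v
      by_cases h : v = a
      · subst h; simpa using hj.1
      · simpa [h] using hc v
    · intro u hu w hw huw
      by_cases h : u = a
      · subst h
        have hne : w ≠ u := huw.ne'
        simpa [hne] using fun e => hj.2 w huw (Eq.symm e)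
      · by_cases h' : w = a
        · subst h'
          simpa [h] using hj.2 u huw.symm
        · simpa [h, h'] using hp u (Finset.mem_of_mem_insert_of_ne hu h) w
            (Finset.mem_of_mem_insert_of_ne hw h') huw

/-- If `|L(u)| ≥ Δ(u) + β` for every node `u` (with `β ≥ 1`), then `Z(G,L) > 0` and
every marginal satisfies `P_{G,L}(c(v)=i) ≤ 1/β`. -/
theorem stmt6 {V : Type} [Fintype V] (β : ℝ) (hβ : 1 ≤ β)
    (G : SimpleGraph V) (L : V → Finset ℕ)
    (hL : ∀ u, (deg G u : ℝ) + β ≤ ((L u).card : ℝ)) :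
    0 < numColorings G L ∧
    ∀ v, ∀ i ∈ L v, colorProb G L {c | c v = i} ≤ 1 / β := by
  have hfin := finite_colorings G L
  have hpos : 0 < numColorings G L := by
    obtain ⟨c, hc, hp⟩ := greedy β hβ G L hL Finset.univ
    exact (Set.ncard_pos hfin).mpr ⟨c, hc, fun u w => hp u (Finset.mem_univ _) w (Finset.mem_univ _)⟩
  refine ⟨hpos, ?_⟩
  intro v i _
  have hposR : (0:ℝ) < numColorings G L := by exact_mod_cast hpos
  rw [colorProb, div_le_div_iff₀ hposR (by linarith), one_mul]
  have hfinA : (properColorings G L ∩ {c | c v = i}).Finite := hfin.subset Set.inter_subset_left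
  have hcard : (hfinA.toFinset.sigma (fun c => L v \ (G.neighborFinset v).image c)).card
      ≤ hfin.toFinset.card := by
    refine Finset.card_le_card_of_injOn (fun p => Function.update p.1 v p.2) ?_ ?_
    · rintro ⟨c, j⟩ h
      simp only [Finset.mem_coe, Finset.mem_sigma, Set.Finite.mem_toFinset, Finset.mem_sdiff,
        Finset.mem_image, SimpleGraph.mem_neighborFinset, not_exists, not_and] at h ⊢
      obtain ⟨⟨⟨hc, hp⟩, -⟩, hj, hn⟩ := h
      refine ⟨?_, ?_⟩
      · intro u
        by_cases h : u = v
        · subst h; simpa using hj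
        · simpa [h] using hc u
      · intro u w huw
        by_cases h : u = v
        · subst h
          have hne : w ≠ u := huw.ne'
          simpa [hne] using fun e => hn w huw (Eq.symm e)
        · by_cases h' : w = v
          · subst h'
            simpa [h] using hn u huw.symm
          · simpa [h, h'] using hp u w huw
    · rintro ⟨c, j⟩ h ⟨c', j'⟩ h' e
      simp only [Finset.mem_coe, Finset.mem_sigma, Set.Finite.mem_toFinset] at h h'
      have h1 : c v = i := h.1.2
      have h2 : c' v = i := h'.1.2
      have ej : j = j' := by simpa using congrFun e v
      have ec : c = c' := by
        funext u
        by_cases hu : u = v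
        · rw [hu, h1, h2]
        · simpa [hu] using congrFun e u
      subst ej ec
      rfl
  rw [Finset.card_sigma] at hcard
  rw [numColorings, Set.ncard_eq_toFinset_card _ hfin, Set.ncard_eq_toFinset_card _ hfinA]
  have hsum : (hfinA.toFinset.card : ℝ) * β
      ≤ ∑ c ∈ hfinA.toFinset, ((L v \ (G.neighborFinset v).image c).card : ℝ) := by
    rw [← nsmul_eq_mul]
    exact Finset.card_nsmul_le_sum _ _ _ (fun c _ => avail_card β G L hL c v)
  refine hsum.trans ?_
  exact_mod_cast hcard
end

section
/- Let α ≥ 1 and β ≥ 2 be real numbers with 2(1 − 1/β)² ≥ 1, and suppose ε₀ := (α/2)·exp(−(1/α)(1 + 1/β)) − 1 > 0. Let (G,L) be a triangle-free graph/list pair satisfying |L(u)| ≥ α·Δ(u) + β for every node u, let Δ be the maximum degree of G and q the total number of distinct colors appearing in the lists. Then Z(G,L) > 0 and for every node v and every color i ∈ L(v): P_{G,L}(c(v)=i) ≥ q^{−1}(1 − 1/β)^Δ, and if Δ(v) > 0 then P_{G,L}(c(v)=i) ≤ 1/(2(1+ε₀)Δ(v)). -/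
open scoped Classical

/-- The maximum degree `Δ` of `G`. -/
noncomputable def maxDeg (V : Type) [Fintype V] (G : SimpleGraph V) : ℕ :=
  Finset.univ.sup (deg G)

lemma log_aux (β : ℝ) (hβ : 2 ≤ β) (h2 : 1 ≤ 2 * (1 - 1 / β) ^ 2) (m : ℝ) (hm : β ≤ m) :
    -(1 + 1 / β) ≤ m * Real.log (1 - 1 / m) := by
  have hβ0 : 0 < β := by linarith
  have hm0 : 0 < m := by linarith
  have hb0 : 0 < 1 / β := by positivity
  have hx0 : 0 < 1 / m := by positivity
  have hxb : 1 / m ≤ 1 / β := one_div_le_one_div_of_le hβ0 hm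
  have hb2 : 1 / β ≤ 1 / 2 := one_div_le_one_div_of_le (by norm_num) hβ
  have hb3 : 1 / β ≤ 1 / 3 := by
    by_contra h
    push Not at h
    nlinarith
  have hmx : m * (1 / m) = 1 := by field_simp
  set x := 1 / m with hx
  have h := Real.abs_log_sub_add_sum_range_le (x := x) (by rw [abs_of_pos hx0]; linarith) 2
  rw [abs_of_pos hx0] at h
  have h' := (abs_le.1 h).1
  norm_num [Finset.sum_range_succ] at h'
  have h3 : x ^ 3 / (1 - x) ≤ x ^ 2 / 2 := by
    rw [div_le_div_iff₀ (by linarith) (by norm_num)]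
    nlinarith [sq_nonneg x]
  have h4 : -(x + x ^ 2) ≤ Real.log (1 - x) := by linarith
  have h5 := mul_le_mul_of_nonneg_left h4 hm0.le
  have h6 : m * -(x + x ^ 2) = -(1 + x) := by
    linear_combination (-(1 + x)) * hmx
  linarith

lemma erase_card_real (s : Finset ℕ) (k : ℕ) (hs : s.Nonempty) :
    ((s.erase k).card : ℝ) = s.card * (1 - if k ∈ s then 1 / (s.card : ℝ) else 0) := by
  have h0 : (s.card : ℝ) ≠ 0 := by exact_mod_cast hs.card_pos.ne'
  split_ifs with h
  · rw [Finset.cast_card_erase_of_mem h]; field_simp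
  · rw [Finset.erase_eq_of_notMem h]; ring

lemma local_lower {V : Type} (β : ℝ) (hβ : 2 ≤ β) (N : Finset V) (M : V → Finset ℕ)
    (hM : ∀ u ∈ N, β ≤ ((M u).card : ℝ)) (Lv : Finset ℕ) (i : ℕ) (hi : i ∈ Lv) :
    ((Lv.card : ℝ))⁻¹ * (1 - 1 / β) ^ N.card *
      (∑ k ∈ Lv, ∏ u ∈ N, (((M u).erase k).card : ℝ)) ≤ ∏ u ∈ N, (((M u).erase i).card : ℝ) := by
  have hβ0 : 0 < β := by linarith
  have hb0 : 0 < 1 / β := by positivity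
  have hb2 : 1 / β ≤ 1 / 2 := one_div_le_one_div_of_le (by norm_num) hβ
  have hc : 0 < (Lv.card : ℝ) := by exact_mod_cast Finset.card_pos.2 ⟨i, hi⟩
  have h1 : ∑ k ∈ Lv, ∏ u ∈ N, (((M u).erase k).card : ℝ) ≤ Lv.card * ∏ u ∈ N, ((M u).card : ℝ) := by
    rw [← nsmul_eq_mul]
    refine Finset.sum_le_card_nsmul _ _ _ fun k _ => ?_
    refine Finset.prod_le_prod (fun _ _ => by positivity) fun u _ => ?_
    exact_mod_cast Finset.card_erase_le
  have h2 : (1 - 1 / β) ^ N.card * ∏ u ∈ N, ((M u).card : ℝ) ≤ ∏ u ∈ N, (((M u).erase i).card : ℝ) := by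
    rw [← Finset.prod_const, ← Finset.prod_mul_distrib]
    refine Finset.prod_le_prod (fun _ _ => mul_nonneg (by linarith) (by positivity)) fun u hu => ?_
    have hm := hM u hu
    have hm0 : 0 < ((M u).card : ℝ) := by linarith
    rw [erase_card_real _ _ (Finset.card_pos.1 (by exact_mod_cast hm0)), mul_comm]
    refine mul_le_mul_of_nonneg_left ?_ hm0.le
    have := one_div_le_one_div_of_le hβ0 hm
    split_ifs <;> linarith
  refine le_trans ?_ h2
  have h3 : 0 ≤ (1 - 1 / β) ^ N.card := pow_nonneg (by linarith) _
  calc _ ≤ ((Lv.card : ℝ))⁻¹ * (1 - 1 / β) ^ N.card * (Lv.card * ∏ u ∈ N, ((M u).card : ℝ)) :=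
        mul_le_mul_of_nonneg_left h1 (by positivity)
    _ = _ := by field_simp

lemma local_upper {V : Type} (α β : ℝ) (hα : 1 ≤ α) (hβ : 2 ≤ β)
    (h2 : 1 ≤ 2 * (1 - 1 / β) ^ 2) (N : Finset V) (M : V → Finset ℕ)
    (hM : ∀ u ∈ N, β ≤ ((M u).card : ℝ)) (Lv : Finset ℕ)
    (hL : α * N.card ≤ Lv.card) (i : ℕ) :
    (α * Real.exp (-(1 / α) * (1 + 1 / β)) * N.card) * ∏ u ∈ N, (((M u).erase i).card : ℝ)
      ≤ ∑ k ∈ Lv, ∏ u ∈ N, (((M u).erase k).card : ℝ) := by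
  have hβ0 : 0 < β := by linarith
  have hα0 : 0 < α := by linarith
  have hb0 : 0 < 1 / β := by positivity
  have hb2 : 1 / β ≤ 1 / 2 := one_div_le_one_div_of_le (by norm_num) hβ
  have hm0 : ∀ u ∈ N, 0 < ((M u).card : ℝ) := fun u hu => by linarith [hM u hu]
  have hne : ∀ u ∈ N, (M u).Nonempty := fun u hu =>
    Finset.card_pos.1 (by exact_mod_cast hm0 u hu)
  obtain ⟨x, hx⟩ : ∃ x : V → ℕ → ℝ,
      x = fun u k => 1 - if k ∈ M u then 1 / ((M u).card : ℝ) else 0 := ⟨_, rfl⟩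
  have hxpos : ∀ u ∈ N, ∀ k, 0 < x u k := by
    intro u hu k
    have := one_div_le_one_div_of_le hβ0 (hM u hu)
    simp only [hx]
    split_ifs <;> linarith
  obtain ⟨P, hP⟩ : ∃ P : ℝ, P = ∏ u ∈ N, ((M u).card : ℝ) := ⟨_, rfl⟩
  have hP0 : 0 < P := hP ▸ Finset.prod_pos hm0
  have hf : ∀ k, ∏ u ∈ N, (((M u).erase k).card : ℝ) = P * ∏ u ∈ N, x u k := by
    intro k
    rw [hP, ← Finset.prod_mul_distrib, hx]
    exact Finset.prod_congr rfl fun u hu => erase_card_real _ _ (hne u hu)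
  have hfi : ∏ u ∈ N, (((M u).erase i).card : ℝ) ≤ P := by
    rw [hP]
    refine Finset.prod_le_prod (fun _ _ => by positivity) fun u _ => ?_
    exact_mod_cast Finset.card_erase_le
  obtain ⟨A, hA⟩ : ∃ A : ℝ, A = -(1 / α) * (1 + 1 / β) := ⟨_, rfl⟩
  rw [← hA]
  have hlog : ∀ u ∈ N, -(1 + 1 / β) ≤ ∑ k ∈ Lv, Real.log (x u k) := by
    intro u hu
    refine (log_aux β hβ h2 _ (hM u hu)).trans ?_
    have hneg : Real.log (1 - 1 / ((M u).card : ℝ)) ≤ 0 := by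
      have := one_div_le_one_div_of_le hβ0 (hM u hu)
      have h0 : 0 < 1 / ((M u).card : ℝ) := by have := hm0 u hu; positivity
      exact Real.log_nonpos (by linarith) (by linarith)
    have : ∀ k, Real.log (x u k) = if k ∈ M u then Real.log (1 - 1 / ((M u).card : ℝ)) else 0 := by
      intro k
      simp only [hx]
      split_ifs <;> simp
    simp_rw [this]
    rw [← Finset.sum_filter, Finset.sum_const, nsmul_eq_mul]
    refine mul_le_mul_of_nonpos_right ?_ hneg
    exact_mod_cast Finset.card_le_card fun k hk => (Finset.mem_filter.1 hk).2
  have hsum : A * Lv.card ≤ ∑ k ∈ Lv, ∑ u ∈ N, Real.log (x u k) := by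
    rw [Finset.sum_comm]
    have h := Finset.card_nsmul_le_sum N _ _ hlog
    refine le_trans ?_ h
    rw [nsmul_eq_mul, hA]
    have h6 : (N.card : ℝ) ≤ 1 / α * Lv.card := by
      rw [one_div, inv_mul_eq_div, le_div_iff₀ hα0]; linarith
    nlinarith
  have hge : Real.exp A * Lv.card ≤ ∑ k ∈ Lv, ∏ u ∈ N, x u k := by
    have h7 : ∀ k ∈ Lv, Real.exp A * (1 + (∑ u ∈ N, Real.log (x u k)) - A) ≤ ∏ u ∈ N, x u k := by
      intro k _
      have h8 : ∏ u ∈ N, x u k = Real.exp A * Real.exp ((∑ u ∈ N, Real.log (x u k)) - A) := by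
        rw [← Real.exp_add, add_sub_cancel, Real.exp_sum]
        exact Finset.prod_congr rfl fun u hu => (Real.exp_log (hxpos u hu k)).symm
      rw [h8]
      refine mul_le_mul_of_nonneg_left ?_ (Real.exp_pos _).le
      linarith [Real.add_one_le_exp ((∑ u ∈ N, Real.log (x u k)) - A)]
    refine le_trans ?_ (Finset.sum_le_sum h7)
    rw [← Finset.mul_sum]
    refine mul_le_mul_of_nonneg_left ?_ (Real.exp_pos _).le
    rw [Finset.sum_sub_distrib, Finset.sum_add_distrib]
    simp only [Finset.sum_const, nsmul_eq_mul]
    linarith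
  simp_rw [hf] at hfi ⊢
  rw [← Finset.mul_sum]
  calc _ ≤ (α * Real.exp A * N.card) * P :=
        mul_le_mul_of_nonneg_left hfi (by have := Real.exp_pos A; positivity)
    _ = P * (Real.exp A * (α * N.card)) := by ring
    _ ≤ P * (Real.exp A * Lv.card) := by
        have := Real.exp_pos A
        gcongr
    _ ≤ _ := mul_le_mul_of_nonneg_left hge hP0.le

lemma deg_eq {V : Type} [Fintype V] (G : SimpleGraph V) (u : V) :
    deg G u = (Finset.univ.filter (G.Adj u)).card := by
  rw [deg, ← Set.ncard_coe_finset]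
  congr 1
  ext w
  simp

lemma exists_avoid {V : Type} [Fintype V] (G : SimpleGraph V) (L : V → Finset ℕ) (v : V)
    (h : deg G v < (L v).card) (c : V → ℕ) : ∃ x ∈ L v, ∀ w, G.Adj v w → c w ≠ x := by
  have h1 : ((Finset.univ.filter (G.Adj v)).image c).card < (L v).card :=
    lt_of_le_of_lt Finset.card_image_le (by rwa [← deg_eq])
  obtain ⟨x, hx, hx'⟩ := Finset.exists_mem_notMem_of_card_lt_card h1
  refine ⟨x, hx, fun w hw he => hx' ?_⟩
  exact Finset.mem_image.2 ⟨w, by simpa using hw, he⟩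

lemma exists_proper {V : Type} [Fintype V] (G : SimpleGraph V) (L : V → Finset ℕ)
    (h : ∀ v, deg G v < (L v).card) : ∃ c, c ∈ properColorings G L := by
  have key : ∀ S : Finset V, ∃ c : V → ℕ, (∀ v, c v ∈ L v) ∧
      ∀ u ∈ S, ∀ w ∈ S, G.Adj u w → c u ≠ c w := by
    intro S
    induction S using Finset.induction_on with
    | empty =>
      have : ∀ v, ∃ x, x ∈ L v := fun v => Finset.card_pos.1 (by have := h v; omega)
      choose c hc using this
      exact ⟨c, hc, by simp⟩
    | insert a S ha ih =>
      obtain ⟨c, hc, hp⟩ := ih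
      obtain ⟨x, hx, hx'⟩ := exists_avoid G L a (h a) c
      refine ⟨Function.update c a x, ?_, ?_⟩
      · intro v
        by_cases hv : v = a
        · subst hv; simpa using hx
        · simpa [hv] using hc v
      · intro u hu w hw huw
        by_cases hua : u = a
        · subst hua
          have hwu : w ≠ u := huw.ne'
          simpa [hwu] using (hx' w huw).symm
        · by_cases hwa : w = a
          · subst hwa
            simpa [hua] using hx' u huw.symm
          · simp only [Function.update_of_ne hua, Function.update_of_ne hwa]
            exact hp u (Finset.mem_of_mem_insert_of_ne hu hua) w
              (Finset.mem_of_mem_insert_of_ne hw hwa) huw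
  obtain ⟨c, hc, hp⟩ := key Finset.univ
  exact ⟨c, hc, fun u w => hp u (Finset.mem_univ _) w (Finset.mem_univ _)⟩

/-- Proper colorings as a finset. -/
noncomputable def pcol {V : Type} [Fintype V] (G : SimpleGraph V) (L : V → Finset ℕ) :
    Finset (V → ℕ) :=
  (Fintype.piFinset L).filter fun c => ∀ u w, G.Adj u w → c u ≠ c w

lemma coe_pcol {V : Type} [Fintype V] (G : SimpleGraph V) (L : V → Finset ℕ) :
    (pcol G L : Set (V → ℕ)) = properColorings G L := by
  ext c
  simp [pcol, properColorings]

lemma mem_pcol {V : Type} [Fintype V] (G : SimpleGraph V) (L : V → Finset ℕ) (c : V → ℕ) :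
    c ∈ pcol G L ↔ (∀ v, c v ∈ L v) ∧ ∀ u w, G.Adj u w → c u ≠ c w := by
  simp [pcol]

/-- Restriction of a coloring to the complement of the closed neighborhood of `v`. -/
noncomputable def restr {V : Type} (G : SimpleGraph V) (v : V) (c : V → ℕ) : V → ℕ :=
  fun u => if u = v ∨ G.Adj v u then 0 else c u

/-- Colors left at `u` after looking at neighbors other than `v`. -/
noncomputable def leftover {V : Type} (G : SimpleGraph V) (L : V → Finset ℕ) (v : V) (c₀ : V → ℕ)
    (u : V) : Finset ℕ :=
  (L u).filter fun x => ∀ w, G.Adj u w → w ≠ v → c₀ w ≠ x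

lemma leftover_card {V : Type} [Fintype V] (G : SimpleGraph V) (L : V → Finset ℕ) (v : V)
    (c₀ : V → ℕ) (u : V) : (L u).card ≤ (leftover G L v c₀ u).card + deg G u := by
  have h : L u ⊆ leftover G L v c₀ u ∪ (Finset.univ.filter (G.Adj u)).image c₀ := by
    intro x hx
    by_cases hx' : x ∈ leftover G L v c₀ u
    · exact Finset.mem_union_left _ hx'
    · refine Finset.mem_union_right _ ?_
      simp only [leftover, Finset.mem_filter, hx, true_and] at hx'
      push Not at hx'
      obtain ⟨w, hw, _, he⟩ := hx'
      exact Finset.mem_image.2 ⟨w, by simpa using hw, he⟩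
  calc _ ≤ _ := Finset.card_le_card h
    _ ≤ _ := Finset.card_union_le _ _
    _ ≤ _ := by
      rw [deg_eq]
      gcongr
      exact Finset.card_image_le

lemma fiber_card {V : Type} [Fintype V] (G : SimpleGraph V) (hfree : G.CliqueFree 3)
    (L : V → Finset ℕ) (v : V) (c₀ : V → ℕ) (h₀ : c₀ ∈ pcol G L) (k : ℕ) (hk : k ∈ L v) :
    ((pcol G L).filter fun c => restr G v c = restr G v c₀ ∧ c v = k).card
      = ∏ u ∈ Finset.univ.filter (G.Adj v), ((leftover G L v c₀ u).erase k).card := by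
  have htri : ∀ u w, G.Adj v u → G.Adj v w → G.Adj u w → False := by
    intro u w h1 h2 h3
    exact hfree {v, u, w} (SimpleGraph.is3Clique_triple_iff.2 ⟨h1, h2, h3⟩)
  obtain ⟨hL₀, hp₀⟩ := (mem_pcol _ _ _).1 h₀
  have hset : ((pcol G L).filter fun c => restr G v c = restr G v c₀ ∧ c v = k)
      = Fintype.piFinset (fun u => if u = v then {k} else
          if G.Adj v u then (leftover G L v c₀ u).erase k else {c₀ u}) := by
    ext c
    rw [Finset.mem_filter, mem_pcol, Fintype.mem_piFinset]
    constructor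
    · rintro ⟨⟨hc, hp⟩, hr, hv⟩ u
      have hout : ∀ w, w ≠ v → ¬ G.Adj v w → c w = c₀ w := by
        intro w h1 h2
        have := congrFun hr w
        simpa [restr, h1, h2] using this
      by_cases huv : u = v
      · subst huv; simpa using hv
      · by_cases hadj : G.Adj v u
        · simp only [huv, hadj, if_true, if_false, Finset.mem_erase, leftover, Finset.mem_filter]
          refine ⟨?_, hc u, ?_⟩
          · rw [← hv]; exact hp u v hadj.symm
          · intro w hw hwv
            rw [← hout w hwv (fun h => htri u w hadj h hw)]
            exact (hp u w hw).symm
        · simpa [huv, hadj] using hout u huv hadj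
    · intro h
      have hv : c v = k := by simpa using h v
      have hN : ∀ u, G.Adj v u → c u ≠ k ∧ c u ∈ L u ∧ ∀ w, G.Adj u w → w ≠ v → c₀ w ≠ c u := by
        intro u hu
        have := h u
        simpa [hu.ne', hu, leftover] using this
      have hout : ∀ w, w ≠ v → ¬ G.Adj v w → c w = c₀ w := by
        intro w h1 h2
        simpa [h1, h2] using h w
      have hNp : ∀ u w, G.Adj v u → G.Adj u w → c u ≠ c w := by
        intro u w hu huw
        by_cases hwv : w = v
        · rw [hwv, hv]; exact (hN u hu).1
        · rw [hout w hwv (fun h => htri u w hu h huw)]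
          exact ((hN u hu).2.2 w huw hwv).symm
      refine ⟨⟨?_, ?_⟩, ?_, hv⟩
      · intro u
        by_cases huv : u = v
        · rw [huv, hv]; exact hk
        · by_cases hadj : G.Adj v u
          · exact (hN u hadj).2.1
          · rw [hout u huv hadj]; exact hL₀ u
      · intro u w huw
        by_cases hu : G.Adj v u
        · exact hNp u w hu huw
        · by_cases hw : G.Adj v w
          · exact (hNp w u hw huw.symm).symm
          · have huv : u ≠ v := by rintro rfl; exact hw huw
            have hwv : w ≠ v := by rintro rfl; exact hu huw.symm
            rw [hout u huv hu, hout w hwv hw]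
            exact hp₀ u w huw
      · funext w
        by_cases hw : w = v ∨ G.Adj v w
        · simp [restr, hw]
        · simp only [restr, hw, if_false]
          push Not at hw
          exact hout w hw.1 hw.2
  rw [hset, Fintype.card_piFinset, Finset.prod_filter]
  refine Finset.prod_congr rfl fun u _ => ?_
  by_cases huv : u = v
  · subst huv; simp
  · by_cases hadj : G.Adj v u <;> simp [huv, hadj]

lemma fiber_total {V : Type} [Fintype V] (G : SimpleGraph V) (hfree : G.CliqueFree 3)
    (L : V → Finset ℕ) (v : V) (c₀ : V → ℕ) (h₀ : c₀ ∈ pcol G L) :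
    ((pcol G L).filter fun c => restr G v c = restr G v c₀).card
      = ∑ k ∈ L v, ∏ u ∈ Finset.univ.filter (G.Adj v), ((leftover G L v c₀ u).erase k).card := by
  rw [Finset.card_eq_sum_card_fiberwise (f := fun c => c v) (t := L v)]
  · refine Finset.sum_congr rfl fun k hk => ?_
    rw [← fiber_card G hfree L v c₀ h₀ k hk, Finset.filter_filter]
  · intro c hc
    exact ((mem_pcol _ _ _).1 (Finset.mem_filter.1 hc).1).1 v

theorem stmt9 {V : Type} [Fintype V] (α β : ℝ) (hα : 1 ≤ α) (hβ : 2 ≤ β)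
    (h2 : 1 ≤ 2 * (1 - 1 / β) ^ 2)
    (hε : 0 < α / 2 * Real.exp (-(1 / α) * (1 + 1 / β)) - 1)
    (G : SimpleGraph V) (hfree : G.CliqueFree 3)
    (L : V → Finset ℕ)
    (hL : ∀ u, α * (deg G u : ℝ) + β ≤ ((L u).card : ℝ)) :
    0 < numColorings G L ∧
    ∀ v, ∀ i ∈ L v,
      (((Finset.univ.biUnion L).card : ℝ))⁻¹ * (1 - 1 / β) ^ (maxDeg V G)
          ≤ colorProb G L {c | c v = i} ∧
      (0 < deg G v →
        colorProb G L {c | c v = i}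
          ≤ 1 / (2 * (1 + (α / 2 * Real.exp (-(1 / α) * (1 + 1 / β)) - 1)) *
              (deg G v : ℝ))) := by
  have hZ : numColorings G L = (pcol G L).card := by
    rw [numColorings, ← coe_pcol, Set.ncard_coe_finset]
  have hdL : ∀ u, (deg G u : ℝ) + β ≤ (L u).card := fun u => by
    have := hL u
    have h0 : (0 : ℝ) ≤ deg G u := by positivity
    nlinarith
  have hpos : 0 < (pcol G L).card := by
    obtain ⟨c, hc⟩ := exists_proper G L fun v => by
      have := hdL v
      have h' : (deg G v : ℝ) < (L v).card := by linarith
      exact_mod_cast h'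
    rw [← coe_pcol] at hc
    exact Finset.card_pos.2 ⟨c, hc⟩
  have hposR : (0 : ℝ) < (pcol G L).card := by exact_mod_cast hpos
  refine ⟨hZ ▸ hpos, fun v i hi => ?_⟩
  have hprob : colorProb G L {c | c v = i}
      = (((pcol G L).filter fun c => c v = i).card : ℝ) / (pcol G L).card := by
    rw [colorProb, hZ, ← coe_pcol, ← Set.ncard_coe_finset ((pcol G L).filter fun c => c v = i)]
    congr 3
    ext c
    simp
  have hS : ((pcol G L).card : ℝ) = ∑ τ ∈ (pcol G L).image (restr G v),
      (((pcol G L).filter fun c => restr G v c = τ).card : ℝ) := by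
    exact_mod_cast Finset.card_eq_sum_card_image (restr G v) (pcol G L)
  have hB : (((pcol G L).filter fun c => c v = i).card : ℝ) = ∑ τ ∈ (pcol G L).image (restr G v),
      (((pcol G L).filter fun c => restr G v c = τ ∧ c v = i).card : ℝ) := by
    rw [Finset.card_eq_sum_card_fiberwise (f := restr G v) (t := (pcol G L).image (restr G v))]
    · push_cast
      refine Finset.sum_congr rfl fun τ _ => ?_
      rw [Finset.filter_filter]
      simp only [and_comm]
    · intro c hc
      exact Finset.mem_image_of_mem _ (Finset.mem_filter.1 hc).1
  have hM : ∀ c₀ : V → ℕ, ∀ u, β ≤ ((leftover G L v c₀ u).card : ℝ) := by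
    intro c₀ u
    have h1 : ((L u).card : ℝ) ≤ (leftover G L v c₀ u).card + deg G u := by
      exact_mod_cast leftover_card G L v c₀ u
    linarith [hdL u]
  have hb2 : 1 / β ≤ 1 / 2 := one_div_le_one_div_of_le (by norm_num) hβ
  have hb0 : 0 < 1 / β := by positivity
  rw [hprob]
  constructor
  · rw [le_div_iff₀ hposR]
    have h1 : (((Finset.univ.biUnion L).card : ℝ))⁻¹ * (1 - 1 / β) ^ (maxDeg V G) ≤
        ((L v).card : ℝ)⁻¹ * (1 - 1 / β) ^ (deg G v) := by
      have hc : 0 < ((L v).card : ℝ) := by exact_mod_cast Finset.card_pos.2 ⟨i, hi⟩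
      have hle : ((L v).card : ℝ) ≤ (Finset.univ.biUnion L).card := by
        exact_mod_cast Finset.card_le_card (Finset.subset_biUnion_of_mem L (Finset.mem_univ v))
      refine mul_le_mul (inv_anti₀ hc hle) ?_ (pow_nonneg (by linarith) _) (by positivity)
      exact pow_le_pow_of_le_one (by linarith) (by linarith)
        (Finset.le_sup (f := deg G) (Finset.mem_univ v))
    refine (mul_le_mul_of_nonneg_right h1 hposR.le).trans ?_
    rw [hS, hB, Finset.mul_sum]
    refine Finset.sum_le_sum fun τ hτ => ?_
    obtain ⟨c₀, h₀, rfl⟩ := Finset.mem_image.1 hτ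
    rw [fiber_total G hfree L v c₀ h₀, fiber_card G hfree L v c₀ h₀ i hi, deg_eq]
    push_cast
    exact local_lower β hβ _ _ (fun u _ => hM c₀ u) (L v) i hi
  · intro hd
    have hdR : (0 : ℝ) < deg G v := by exact_mod_cast hd
    have he := Real.exp_pos (-(1 / α) * (1 + 1 / β))
    have e : 2 * (1 + (α / 2 * Real.exp (-(1 / α) * (1 + 1 / β)) - 1)) * (deg G v : ℝ)
      = α * Real.exp (-(1 / α) * (1 + 1 / β)) * deg G v := by ring
    rw [e, div_le_div_iff₀ hposR (by positivity), one_mul, mul_comm, hS, hB, Finset.mul_sum]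
    refine Finset.sum_le_sum fun τ hτ => ?_
    obtain ⟨c₀, h₀, rfl⟩ := Finset.mem_image.1 hτ
    rw [fiber_total G hfree L v c₀ h₀, fiber_card G hfree L v c₀ h₀ i hi, deg_eq]
    push_cast
    refine local_upper α β hα hβ h2 _ _ (fun u _ => hM c₀ u) (L v) ?_ i
    rw [← deg_eq]
    linarith [hL v]
end
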